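/- Suppose ρ ∈ (0,1) is irrational and its continued fraction partial quotients satisfy aₙ ≤ n² for all sufficiently large n. Then for any δ > 0, for all sufficiently small ε > 0 and every real x, there exists an integer n with 0 ≤ n ≤ ε^{−(1/3+δ)} and ‖x + n·ρ‖ ≤ ε^{1/3}. -/

import Mathlib

open MeasureTheory Filter

/-- The Gauss map `x ↦ {1/x}`. -/
noncomputable def gaussMap (x : ℝ) : ℝ := Int.fract (1 / x)

/-- The `n`-th continued fraction partial quotient of `ρ` (for `n ≥ 1`):
`aₙ(ρ) = ⌊1 / G^[n-1] ρ⌋` where `G` is the Gauss map. -/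
noncomputable def cfa (ρ : ℝ) (n : ℕ) : ℤ := ⌊1 / (gaussMap^[n - 1] ρ)⌋

/-- The Diophantine condition (2): `aₙ ≤ n²` for all sufficiently large `n`. -/
def DiophCond (ρ : ℝ) : Prop := ∃ N : ℕ, ∀ n : ℕ, N ≤ n → cfa ρ n ≤ (n : ℤ) ^ 2

/-- Denominators `qₙ` of the continued fraction convergents of `ρ`:
`q₀ = 1`, `q₁ = a₁`, `q_{n+2} = a_{n+2} q_{n+1} + qₙ`. -/
noncomputable def cfq (ρ : ℝ) : ℕ → ℤ
  | 0 => 1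
  | 1 => cfa ρ 1
  | n + 2 => cfa ρ (n + 2) * cfq ρ (n + 1) + cfq ρ n

/-- Numerators `pₙ` of the continued fraction convergents of `ρ`:
`p₀ = 0`, `p₁ = 1`, `p_{n+2} = a_{n+2} p_{n+1} + pₙ`. -/
noncomputable def cfp (ρ : ℝ) : ℕ → ℤ
  | 0 => 0
  | 1 => 1
  | n + 2 => cfa ρ (n + 2) * cfp ρ (n + 1) + cfp ρ n

/-- Distance from a real number to the nearest integer. -/
noncomputable def distNearestInt (t : ℝ) : ℝ := |t - round t|

/-!
**Covering the circle.** If `p` is prime to `q`, the points `x + k p / q`, `0 ≤ k < q`, run modulo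
`1` through all translates of `x` by multiples of `1 / q`, so one of them lies within `1 / (2 q)` of
an integer; replacing `p / q` by `ρ` moves it by at most `|q ρ - p|`. For a convergent
`|qₙ ρ - pₙ| ≤ 1 / qₙ₊₁`, so every `x` admits `k < qₙ` with `‖x + k ρ‖ ≤ 2 / qₙ`.

**Choosing the scale.** The denominators grow at least like powers of the golden ratio, hence
subexponential partial quotients are negligible against every positive power of `qₙ`, and
`qₙ₊₁ ≤ (aₙ₊₁ + 1) qₙ` is eventually below any multiple of `qₙ ^ (1 + s)`. The first denominator
beyond `2 / η` is therefore at most `η ^ (-(1 + s))` once `η` is small.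
-/

/-! ### Covering the circle by an orbit segment -/

theorem exists_nat_lt_dvd_add_mul {p q : ℤ} (hpq : IsCoprime p q) (hq : 0 < q) (a : ℤ) :
    ∃ k : ℕ, (k : ℤ) < q ∧ q ∣ a + k * p := by
  obtain ⟨u, v, huv⟩ := hpq
  obtain ⟨k, hkq, hk⟩ := Int.existsUnique_equiv_nat (-(a * u)) hq
  refine ⟨k, hkq, ?_⟩
  obtain ⟨c, hc⟩ := hk.symm.dvd
  exact ⟨a * v + c * p, by linear_combination p * hc - a * huv⟩

theorem exists_nat_lt_distNearestInt_add_mul_le {p q : ℤ} (hpq : IsCoprime p q) (hq : 0 < q)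
    (ρ x : ℝ) :
    ∃ k : ℕ, (k : ℤ) < q ∧ distNearestInt (x + k * ρ) ≤ 1 / (2 * q) + |q * ρ - p| := by
  obtain ⟨m, hm⟩ : ∃ m : ℤ, |q * x - m| ≤ 1 / 2 := ⟨_, abs_sub_round _⟩
  obtain ⟨k, hkq, z, hz⟩ := exists_nat_lt_dvd_add_mul hpq hq m
  have hq' : (0 : ℝ) < q := by exact_mod_cast hq
  have hkq' : (k : ℝ) / q ≤ 1 := (div_le_one hq').2 (by exact_mod_cast hkq.le)
  have hz' : (m : ℝ) + k * p = q * z := by exact_mod_cast hz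
  have hsplit : x + k * ρ - z = (q * x - m) / q + k / q * (q * ρ - p) := by
    field_simp
    linear_combination hz'
  refine ⟨k, hkq, (round_le _ z).trans ?_⟩
  rw [hsplit]
  refine (abs_add_le _ _).trans (add_le_add ?_ ?_)
  · rw [abs_div, abs_of_pos hq', ← div_div]
    gcongr
  · rw [abs_mul, abs_of_nonneg (by positivity)]
    exact mul_le_of_le_one_left (abs_nonneg _) hkq'

/-! ### Convergents -/

section Convergents

open GenContFract

variable {ρ : ℝ}

theorem irrational_gaussMap {x : ℝ} (hx : Irrational x) : Irrational (gaussMap x) :=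
  (one_div x ▸ hx.inv).sub_intCast _

theorem irrational_gaussMap_iterate {x : ℝ} (hx : Irrational x) :
    ∀ n, Irrational (gaussMap^[n] x)
  | 0 => hx
  | n + 1 => irrational_gaussMap_iterate (irrational_gaussMap hx) n

theorem stream_succ_eq_some_cfa (hρ : ρ ∈ Set.Ioo (0 : ℝ) 1) (hirr : Irrational ρ) (n : ℕ) :
    IntFractPair.stream ρ (n + 1) = some ⟨cfa ρ (n + 1), gaussMap^[n + 1] ρ⟩ := by
  have hstep (k : ℕ) : IntFractPair.of (gaussMap^[k] ρ)⁻¹ =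
      ⟨cfa ρ (k + 1), gaussMap^[k + 1] ρ⟩ := by
    simp only [IntFractPair.of, cfa, gaussMap, one_div, Nat.add_sub_cancel,
      Function.iterate_succ_apply']
  induction n with
  | zero =>
    have hfract : Int.fract ρ = ρ := Int.fract_eq_self.2 ⟨hρ.1.le, hρ.2⟩
    rw [← hstep, IntFractPair.stream_succ_of_some (IntFractPair.stream_zero ρ)]
    · simp only [IntFractPair.of, hfract, Function.iterate_zero_apply]
    · simpa only [IntFractPair.of, hfract] using hirr.ne_zero
  | succ k ih =>
    rw [← hstep]
    exact IntFractPair.stream_succ_of_some ih (irrational_gaussMap_iterate hirr (k + 1)).ne_zero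

theorem of_s_get?_eq_some_cfa (hρ : ρ ∈ Set.Ioo (0 : ℝ) 1) (hirr : Irrational ρ) (n : ℕ) :
    (GenContFract.of ρ).s.get? n = some ⟨1, cfa ρ (n + 1)⟩ :=
  get?_of_eq_some_of_succ_get?_intFractPair_stream (stream_succ_eq_some_cfa hρ hirr n)

theorem not_terminatedAt_of_irrational (hρ : ρ ∈ Set.Ioo (0 : ℝ) 1) (hirr : Irrational ρ) (n : ℕ) :
    ¬(GenContFract.of ρ).TerminatedAt n := by
  simp [terminatedAt_iff_s_none, of_s_get?_eq_some_cfa hρ hirr]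

theorem dens_of_eq_cfq (hρ : ρ ∈ Set.Ioo (0 : ℝ) 1) (hirr : Irrational ρ) (n : ℕ) :
    (GenContFract.of ρ).dens n = cfq ρ n := by
  induction n using Nat.twoStepInduction with
  | zero => simp [zeroth_den_eq_one, cfq]
  | one => rw [first_den_eq (of_s_get?_eq_some_cfa hρ hirr 0), cfq]
  | more n ih ih' =>
    rw [dens_recurrence (of_s_get?_eq_some_cfa hρ hirr (n + 1)) ih ih', cfq]
    push_cast
    ring

theorem nums_of_eq_cfp (hρ : ρ ∈ Set.Ioo (0 : ℝ) 1) (hirr : Irrational ρ) (n : ℕ) :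
    (GenContFract.of ρ).nums n = cfp ρ n := by
  have hfloor : ⌊ρ⌋ = 0 := Int.floor_eq_zero_iff.2 ⟨hρ.1.le, hρ.2⟩
  induction n using Nat.twoStepInduction with
  | zero => simp [zeroth_num_eq_h, of_h_eq_floor, hfloor, cfp]
  | one => simp [first_num_eq (of_s_get?_eq_some_cfa hρ hirr 0), of_h_eq_floor, hfloor, cfp]
  | more n ih ih' =>
    rw [nums_recurrence (of_s_get?_eq_some_cfa hρ hirr (n + 1)) ih ih', cfp]
    push_cast
    ring

theorem cfp_succ_mul_cfq_sub_cfp_mul_cfq_succ (ρ : ℝ) (n : ℕ) :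
    cfp ρ (n + 1) * cfq ρ n - cfp ρ n * cfq ρ (n + 1) = (-1) ^ n := by
  induction n with
  | zero => simp [cfq, cfp]
  | succ n ih =>
    simp only [cfq, cfp]
    linear_combination -ih

theorem isCoprime_cfp_cfq (ρ : ℝ) (n : ℕ) : IsCoprime (cfp ρ n) (cfq ρ n) := by
  have hsq : (-1 : ℤ) ^ n * (-1) ^ n = 1 := by rw [← mul_pow, neg_one_mul, neg_neg, one_pow]
  exact ⟨-(-1) ^ n * cfq ρ (n + 1), (-1) ^ n * cfp ρ (n + 1), by
    linear_combination (-1) ^ n * cfp_succ_mul_cfq_sub_cfp_mul_cfq_succ ρ n + hsq⟩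

theorem fib_succ_le_cfq (hρ : ρ ∈ Set.Ioo (0 : ℝ) 1) (hirr : Irrational ρ) (n : ℕ) :
    (Nat.fib (n + 1) : ℝ) ≤ cfq ρ n :=
  dens_of_eq_cfq hρ hirr n ▸
    succ_nth_fib_le_of_nth_den (.inr (not_terminatedAt_of_irrational hρ hirr _))

theorem cfq_pos (hρ : ρ ∈ Set.Ioo (0 : ℝ) 1) (hirr : Irrational ρ) (n : ℕ) : 0 < cfq ρ n := by
  have hfib : 0 < Nat.fib (n + 1) := Nat.fib_pos.2 n.succ_pos
  exact_mod_cast (Nat.cast_pos.2 hfib).trans_le (fib_succ_le_cfq hρ hirr n)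

theorem monotone_cfq (hρ : ρ ∈ Set.Ioo (0 : ℝ) 1) (hirr : Irrational ρ) : Monotone (cfq ρ) :=
  monotone_nat_of_le_succ fun n => by
    exact_mod_cast dens_of_eq_cfq hρ hirr n ▸ dens_of_eq_cfq hρ hirr (n + 1) ▸
      of_den_mono (v := ρ) (n := n)

theorem abs_cfq_mul_sub_cfp_le (hρ : ρ ∈ Set.Ioo (0 : ℝ) 1) (hirr : Irrational ρ) (n : ℕ) :
    |cfq ρ n * ρ - cfp ρ n| ≤ 1 / cfq ρ (n + 1) := by
  have hq : (0 : ℝ) < cfq ρ n := by exact_mod_cast cfq_pos hρ hirr n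
  have happrox := abs_sub_convs_le (not_terminatedAt_of_irrational hρ hirr n)
  rw [conv_eq_num_div_den, dens_of_eq_cfq hρ hirr, dens_of_eq_cfq hρ hirr,
    nums_of_eq_cfp hρ hirr] at happrox
  calc |cfq ρ n * ρ - cfp ρ n| = cfq ρ n * |ρ - cfp ρ n / cfq ρ n| := by
        rw [← abs_of_pos hq, ← abs_mul, abs_of_pos hq]
        field_simp
    _ ≤ cfq ρ n * (1 / (cfq ρ n * cfq ρ (n + 1))) := by gcongr
    _ = 1 / cfq ρ (n + 1) := by field_simp

theorem exists_nat_lt_cfq_distNearestInt_le (hρ : ρ ∈ Set.Ioo (0 : ℝ) 1) (hirr : Irrational ρ)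
    (n : ℕ) (x : ℝ) :
    ∃ k : ℕ, (k : ℤ) < cfq ρ n ∧ distNearestInt (x + k * ρ) ≤ 2 / cfq ρ n := by
  have hq : (0 : ℝ) < cfq ρ n := by exact_mod_cast cfq_pos hρ hirr n
  have hmono : (cfq ρ n : ℝ) ≤ cfq ρ (n + 1) := by
    exact_mod_cast monotone_cfq hρ hirr n.le_succ
  obtain ⟨k, hkq, hk⟩ := exists_nat_lt_distNearestInt_add_mul_le (isCoprime_cfp_cfq ρ n)
    (cfq_pos hρ hirr n) ρ x
  refine ⟨k, hkq, hk.trans ?_⟩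
  calc 1 / (2 * cfq ρ n : ℝ) + |cfq ρ n * ρ - cfp ρ n|
      ≤ 1 / cfq ρ n + 1 / cfq ρ n := by
        gcongr
        · linarith
        · exact (abs_cfq_mul_sub_cfp_le hρ hirr n).trans (one_div_le_one_div_of_le hq hmono)
    _ = 2 / cfq ρ n := by ring

end Convergents

/-! ### Growth of the denominators -/

section Growth

open Asymptotics Real

variable {ρ : ℝ}

theorem cfa_nonneg (hρ : 0 ≤ ρ) (n : ℕ) : 0 ≤ cfa ρ n := by
  refine Int.floor_nonneg.2 (one_div_nonneg.2 ?_)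
  cases n - 1 with
  | zero => exact hρ
  | succ m =>
    rw [Function.iterate_succ_apply']
    exact Int.fract_nonneg _

theorem cfa_isLittleO_pow_of_eventually_le_pow (hρ : 0 ≤ ρ) {k : ℕ}
    (hle : ∀ᶠ n : ℕ in atTop, cfa ρ n ≤ (n : ℤ) ^ k) {b : ℝ} (hb : 1 < b) :
    (fun n => (cfa ρ n : ℝ)) =o[atTop] fun n => b ^ n := by
  have hbound : (fun n => (cfa ρ n : ℝ)) =O[atTop] fun n : ℕ => (n : ℝ) ^ k := by
    refine .of_bound' (hle.mono fun n hn => ?_)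
    rw [norm_of_nonneg (by exact_mod_cast cfa_nonneg hρ n), norm_of_nonneg (by positivity)]
    exact_mod_cast hn
  exact hbound.trans_isLittleO (isLittleO_pow_const_const_pow_of_one_lt k hb)

theorem goldenRatio_pow_le_mul_cfq (hρ : ρ ∈ Set.Ioo (0 : ℝ) 1) (hirr : Irrational ρ) (n : ℕ) :
    goldenRatio ^ (n + 1) ≤ goldenRatio ^ 2 * cfq ρ n := by
  have hfib : (Nat.fib n : ℝ) ≤ Nat.fib (n + 1) := by exact_mod_cast Nat.fib_le_fib_succ
  calc goldenRatio ^ (n + 1) = goldenRatio * Nat.fib (n + 1) + Nat.fib n :=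
        (goldenRatio_mul_fib_succ_add_fib n).symm
    _ ≤ goldenRatio ^ 2 * Nat.fib (n + 1) := by rw [goldenRatio_sq]; linarith
    _ ≤ goldenRatio ^ 2 * cfq ρ n := by gcongr; exact fib_succ_le_cfq hρ hirr n

theorem tendsto_cfq_atTop (hρ : ρ ∈ Set.Ioo (0 : ℝ) 1) (hirr : Irrational ρ) :
    Tendsto (fun n => (cfq ρ n : ℝ)) atTop atTop :=
  Tendsto.atTop_of_const_mul₀ (pow_pos goldenRatio_pos 2) <|
    tendsto_atTop_mono (goldenRatio_pow_le_mul_cfq hρ hirr) <|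
      (tendsto_pow_atTop_atTop_of_one_lt one_lt_goldenRatio).comp (tendsto_add_atTop_nat 1)

theorem cfq_succ_le (hρ : ρ ∈ Set.Ioo (0 : ℝ) 1) (hirr : Irrational ρ) (n : ℕ) :
    cfq ρ (n + 1) ≤ (cfa ρ (n + 1) + 1) * cfq ρ n := by
  cases n with
  | zero => simp [cfq]
  | succ n =>
    have hmono : cfq ρ n ≤ cfq ρ (n + 1) := monotone_cfq hρ hirr n.le_succ
    rw [cfq]
    linarith

theorem cfa_succ_add_one_isLittleO_cfq_rpow (hρ : ρ ∈ Set.Ioo (0 : ℝ) 1) (hirr : Irrational ρ)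
    (hsub : ∀ b : ℝ, 1 < b → (fun n => (cfa ρ n : ℝ)) =o[atTop] fun n => b ^ n)
    {s : ℝ} (hs : 0 < s) :
    (fun n => (cfa ρ (n + 1) : ℝ) + 1) =o[atTop] fun n => (cfq ρ n : ℝ) ^ s := by
  have hb : 1 < goldenRatio ^ s := one_lt_rpow one_lt_goldenRatio hs
  have hone : (fun _ : ℕ => (1 : ℝ)) =o[atTop] fun n => (goldenRatio ^ s) ^ n := by
    simpa only [one_pow] using isLittleO_pow_pow_of_lt_left zero_le_one hb
  refine (((hsub _ hb).add hone).comp_tendsto (tendsto_add_atTop_nat 1)).trans_isBigO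
    (.of_bound ((goldenRatio ^ 2) ^ s) (.of_forall fun n => ?_))
  have hq : (0 : ℝ) < cfq ρ n := by exact_mod_cast cfq_pos hρ hirr n
  have hφ : 0 < goldenRatio := goldenRatio_pos
  rw [Function.comp_apply, norm_of_nonneg (by positivity), norm_of_nonneg (by positivity),
    ← mul_rpow (by positivity) hq.le, rpow_pow_comm hφ.le]
  exact rpow_le_rpow (by positivity) (goldenRatio_pow_le_mul_cfq hρ hirr n) hs.le

theorem cfq_succ_isLittleO_cfq_rpow (hρ : ρ ∈ Set.Ioo (0 : ℝ) 1) (hirr : Irrational ρ)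
    (hsub : ∀ b : ℝ, 1 < b → (fun n => (cfa ρ n : ℝ)) =o[atTop] fun n => b ^ n)
    {s : ℝ} (hs : 0 < s) :
    (fun n => (cfq ρ (n + 1) : ℝ)) =o[atTop] fun n => (cfq ρ n : ℝ) ^ (1 + s) := by
  have hq (n : ℕ) : (0 : ℝ) < cfq ρ n := by exact_mod_cast cfq_pos hρ hirr n
  have hprod := (cfa_succ_add_one_isLittleO_cfq_rpow hρ hirr hsub hs).mul_isBigO
    (isBigO_refl (fun n => (cfq ρ n : ℝ)) atTop)
  have hpow (n : ℕ) : (cfq ρ n : ℝ) ^ s * cfq ρ n = (cfq ρ n : ℝ) ^ (1 + s) := by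
    rw [add_comm, rpow_add_one (hq n).ne']
  simp only [hpow] at hprod
  refine IsBigO.trans_isLittleO (.of_bound' (.of_forall fun n => ?_)) hprod
  rw [norm_of_nonneg (hq _).le]
  exact (by exact_mod_cast cfq_succ_le hρ hirr n : (cfq ρ (n + 1) : ℝ) ≤ _).trans (le_abs_self _)

end Growth

/-! ### Choosing the scale -/

section Scale

open Asymptotics Topology

theorem eventually_exists_le_and_le_of_succ_le {α : Type*} [LinearOrder α] [NoMaxOrder α]
    [Nonempty α] {u : ℕ → α} {f : α → α} {a : α} (hu : Tendsto u atTop atTop)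
    (hf : MonotoneOn f (Set.Ici a)) (hsucc : ∀ᶠ n in atTop, u (n + 1) ≤ f (u n)) :
    ∀ᶠ t in atTop, ∃ n, t ≤ u n ∧ u n ≤ f t := by
  obtain ⟨N, hN⟩ := eventually_atTop.1 (hsucc.and (hu.eventually_ge_atTop a))
  filter_upwards [eventually_gt_atTop (u N)] with t ht
  have hcross : ∃ k, t ≤ u (N + k) :=
    ((hu.comp (tendsto_atTop_mono (Nat.le_add_left · N) tendsto_id)).eventually_ge_atTop t).exists
  obtain ⟨k, hbelow, habove⟩ := Nat.exists_not_and_succ_of_not_zero_of_exists ht.not_ge hcross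
  have hlt : u (N + k) < t := not_le.1 hbelow
  obtain ⟨hle, ha⟩ := hN (N + k) (N.le_add_right k)
  exact ⟨N + k + 1, habove, hle.trans (hf ha (ha.trans hlt.le) hlt.le)⟩

variable {ρ : ℝ}

theorem eventually_exists_distNearestInt_add_mul_le (hρ : ρ ∈ Set.Ioo (0 : ℝ) 1)
    (hirr : Irrational ρ) {r : ℝ} (hr : 0 ≤ r)
    (hgrowth : (fun n => (cfq ρ (n + 1) : ℝ)) =o[atTop] fun n => (cfq ρ n : ℝ) ^ r) :
    ∀ᶠ η : ℝ in 𝓝[>] 0, ∀ x : ℝ,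
      ∃ k : ℕ, (k : ℝ) ≤ η ^ (-r) ∧ distNearestInt (x + k * ρ) ≤ η := by
  have hq (n : ℕ) : (0 : ℝ) < cfq ρ n := by exact_mod_cast cfq_pos hρ hirr n
  -- The factor `2 ^ (-r)` makes up for evaluating the bound at `2 / η`.
  have hsucc : ∀ᶠ n in atTop, (cfq ρ (n + 1) : ℝ) ≤ 2 ^ (-r) * (cfq ρ n : ℝ) ^ r := by
    filter_upwards [hgrowth.bound (show (0 : ℝ) < 2 ^ (-r) by positivity)] with n hn
    rwa [Real.norm_of_nonneg (hq _).le, Real.norm_of_nonneg (Real.rpow_nonneg (hq n).le r)] at hn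
  have hmono : MonotoneOn (fun t : ℝ => 2 ^ (-r) * t ^ r) (Set.Ici 0) :=
    fun _ hs _ _ hst =>
      mul_le_mul_of_nonneg_left (Real.rpow_le_rpow hs hst hr) (by positivity)
  have hscale : Tendsto (fun η : ℝ => 2 * η⁻¹) (𝓝[>] 0) atTop :=
    tendsto_inv_nhdsGT_zero.const_mul_atTop two_pos
  filter_upwards [self_mem_nhdsWithin, hscale.eventually
    (eventually_exists_le_and_le_of_succ_le (tendsto_cfq_atTop hρ hirr) hmono hsucc)]
    with η hη ⟨n, hlower, hupper⟩ x
  have hη : 0 < η := hη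
  obtain ⟨k, hkq, hk⟩ := exists_nat_lt_cfq_distNearestInt_le hρ hirr n x
  refine ⟨k, ?_, hk.trans ?_⟩
  · calc (k : ℝ) ≤ cfq ρ n := by exact_mod_cast hkq.le
      _ ≤ 2 ^ (-r) * (2 * η⁻¹) ^ r := hupper
      _ = η ^ (-r) := by
        rw [Real.mul_rpow two_pos.le (by positivity), ← mul_assoc, ← Real.rpow_add two_pos,
          neg_add_cancel, Real.rpow_zero, one_mul, Real.inv_rpow hη.le, Real.rpow_neg hη.le]
  · rw [div_le_comm₀ (hq n) hη]
    exact hlower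

theorem tendsto_rpow_nhdsGT_zero {r : ℝ} (hr : 0 < r) :
    Tendsto (fun x : ℝ => x ^ r) (𝓝[>] 0) (𝓝[>] 0) := by
  refine tendsto_nhdsWithin_iff.2 ⟨?_, ?_⟩
  · simpa only [Real.zero_rpow hr.ne'] using
      (Real.continuousAt_rpow_const 0 r (.inr hr.le)).tendsto.mono_left nhdsWithin_le_nhds
  · filter_upwards [self_mem_nhdsWithin] with x hx using Real.rpow_pos_of_pos hx r

theorem stmt_7_general (hρ : ρ ∈ Set.Ioo (0 : ℝ) 1) (hirr : Irrational ρ)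
    (hsub : ∀ b : ℝ, 1 < b → (fun n => (cfa ρ n : ℝ)) =o[atTop] fun n => b ^ n)
    {τ δ : ℝ} (hτ : 0 < τ) (hδ : 0 < δ) :
    ∀ᶠ ε : ℝ in 𝓝[>] 0, ∀ x : ℝ,
      ∃ n : ℕ, (n : ℝ) ≤ ε ^ (-(τ + δ)) ∧ distNearestInt (x + n * ρ) ≤ ε ^ τ := by
  have hscale := eventually_exists_distNearestInt_add_mul_le hρ hirr (by positivity)
    (cfq_succ_isLittleO_cfq_rpow hρ hirr hsub (div_pos hδ hτ))
  filter_upwards [self_mem_nhdsWithin, (tendsto_rpow_nhdsGT_zero hτ).eventually hscale]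
    with ε hε hcover
  have hexp : (ε ^ τ) ^ (-(1 + δ / τ)) = ε ^ (-(τ + δ)) := by
    rw [← Real.rpow_mul (le_of_lt hε)]
    congr 1
    field_simp
  rwa [hexp] at hcover

end Scale

/-- under the Diophantine condition (2), for any `δ > 0` and all
sufficiently small `ε > 0`, every real `x` admits an integer `n` with
`0 ≤ n ≤ ε^{−(1/3+δ)}` and `‖x + nρ‖ ≤ ε^{1/3}`. -/
theorem stmt_7 (ρ : ℝ) (hρ : ρ ∈ Set.Ioo (0 : ℝ) 1) (hirr : Irrational ρ)
    (hdioph : DiophCond ρ) :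
    ∀ δ : ℝ, 0 < δ → ∃ ε₀ : ℝ, 0 < ε₀ ∧ ∀ ε : ℝ, 0 < ε → ε ≤ ε₀ → ∀ x : ℝ,
      ∃ n : ℕ, (n : ℝ) ≤ ε ^ (-(1 / 3 + δ) : ℝ) ∧
        distNearestInt (x + (n : ℝ) * ρ) ≤ ε ^ (1 / 3 : ℝ) := by
  intro δ hδ
  obtain ⟨ε₀, hε₀, hcover⟩ := mem_nhdsGT_iff_exists_Ioc_subset.1 <|
    stmt_7_general hρ hirr (fun _ => cfa_isLittleO_pow_of_eventually_le_pow hρ.1.le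
      (eventually_atTop.2 hdioph)) (τ := 1 / 3) (by norm_num) hδ
  exact ⟨ε₀, hε₀, fun ε hε hle => hcover ⟨hε, hle⟩⟩
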